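/- arXiv:2206.11480 — 2 statements merged into one kernel-verified Lean document; each statement's English description precedes it below -/
import Mathlib

section
/- The alternative classifier f_B of Assumption 1 has defended 0–1 risk R(x ↦ sgn(f_B(x))) = ε; in particular, R(x ↦ sgn(f_B(x))) = R(x ↦ sgn(f_S(x))), so the defended risk does not distinguish f_B from f_S. -/
open MeasureTheory ENNReal

/-- The sign function: `sgn u = 1` if `u ≥ 0`, and `-1` otherwise. -/
noncomputable def sgn (u : ℝ) : ℝ := if 0 ≤ u then 1 else -1

/-- The defended 0–1 risk of a classifier `h` against the server's classifier `fS`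
protected by the symmetric-Bernoulli defense on the set `S`:
`R(h) = ∫_{X\S} 1{h ≠ sgn fS} dQ + (1/2) ∫_S (1{h ≠ sgn fS} + 1{h ≠ -sgn fS}) dQ`. -/
noncomputable def defendedRisk {X : Type*} [MeasurableSpace X] (Q : Measure X)
    (S : Set X) (fS : X → ℝ) (h : X → ℝ) : ℝ≥0∞ :=
  (∫⁻ x in Sᶜ, (if h x ≠ sgn (fS x) then (1 : ℝ≥0∞) else 0) ∂Q)
    + (1 / 2) * ∫⁻ x in S,
        ((if h x ≠ sgn (fS x) then (1 : ℝ≥0∞) else 0)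
          + (if h x ≠ -sgn (fS x) then (1 : ℝ≥0∞) else 0)) ∂Q

/-- The alternative classifier `f_B` of Assumption 1 has defended 0–1 risk
`R(x ↦ sgn(f_B(x))) = ε`; in particular it equals the defended risk of the
server's own classifier, so the defended risk does not distinguish `f_B` from `f_S`. -/
theorem defendedRisk_fB_eq {X : Type*} [MeasurableSpace X]
    (Q : Measure X) [IsProbabilityMeasure Q]
    (fS : X → ℝ) (hfS : Measurable fS)
    (S : Set X) (hS : MeasurableSet S)
    (ε : ℝ) (hε : ε ∈ Set.Ioo (0 : ℝ) (1 / 2))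
    (hQS : Q S = ENNReal.ofReal (2 * ε))
    (fB : X → ℝ) (hfB : Measurable fB)
    (hB_in : ∀ x ∈ S, sgn (fB x) = -sgn (fS x))
    (hB_out : ∀ x ∉ S, sgn (fB x) = sgn (fS x)) :
    defendedRisk Q S fS (fun x => sgn (fB x)) = ENNReal.ofReal ε ∧
      defendedRisk Q S fS (fun x => sgn (fB x))
        = defendedRisk Q S fS (fun x => sgn (fS x)) := by
  have key : ∀ h : X → ℝ, (∀ x ∉ S, h x = sgn (fS x)) →
      (∀ x ∈ S, h x = sgn (fS x) ∨ h x = -sgn (fS x)) →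
      defendedRisk Q S fS h = ENNReal.ofReal ε := by
    intro h h1 h2
    unfold defendedRisk
    have e1 : (∫⁻ x in Sᶜ, (if h x ≠ sgn (fS x) then (1 : ℝ≥0∞) else 0) ∂Q) = 0 := by
      rw [setLIntegral_congr_fun (g := fun _ => 0) hS.compl]
      · simp
      · intro x hx
        simp [h1 x hx]
    have e2 : (∫⁻ x in S, ((if h x ≠ sgn (fS x) then (1 : ℝ≥0∞) else 0)
          + (if h x ≠ -sgn (fS x) then (1 : ℝ≥0∞) else 0)) ∂Q) = Q S := by
      rw [setLIntegral_congr_fun (g := fun _ => 1) hS]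
      · simp
      · intro x hx
        have hne : sgn (fS x) ≠ -sgn (fS x) := by
          unfold sgn
          split_ifs <;> norm_num
        rcases h2 x hx with h3 | h3
        · simp only [h3]
          simp [hne]
        · simp only [h3]
          simp [hne.symm]
    rw [e1, e2, hQS, zero_add, ENNReal.ofReal_mul (by norm_num), ← mul_assoc]
    have : (1 / 2 : ℝ≥0∞) * ENNReal.ofReal 2 = 1 := by
      rw [ENNReal.ofReal_ofNat, one_div]
      exact ENNReal.inv_mul_cancel (by norm_num) (by norm_num)
    rw [this, one_mul]
  have hb := key (fun x => sgn (fB x)) hB_out (fun x hx => Or.inr (hB_in x hx))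
  have hs := key (fun x => sgn (fS x)) (fun _ _ => rfl) (fun _ _ => Or.inl rfl)
  exact ⟨hb, hb.trans hs.symm⟩
end

section
/- (Proposition 1, part i.) Suppose there exists c̄ < 1/2 with c(x) ≤ c̄ for all x ∈ X. Then any measurable classifier h : X → {−1, 1} that globally minimizes the noisy 0–1 risk R̃ over all measurable classifiers satisfies Q({x : h(x) ≠ sgn(f_S(x))}) = 0; that is, the adversary exactly extracts the server's model. -/
open MeasureTheory ENNReal

/-- The noisy 0–1 risk of a classifier `h` against the server's classifier `fS` under the
uniformly flipping defense with noise function `c`: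
`R̃(h) = ∫ [(1 − c x)·1{h x ≠ sgn (fS x)} + c x·1{h x = sgn (fS x)}] dQ`. -/
noncomputable def noisyRisk {X : Type*} [MeasurableSpace X] (Q : Measure X)
    (fS : X → ℝ) (c : X → ℝ) (h : X → ℝ) : ℝ :=
  ∫ x, ((1 - c x) * (if h x ≠ sgn (fS x) then (1 : ℝ) else 0)
    + c x * (if h x = sgn (fS x) then (1 : ℝ) else 0)) ∂Q

/-- (Proposition 1, part i.) If the flipping probability is uniformly bounded above by some
`c̄ < 1/2`, then any measurable classifier minimizing the noisy 0–1 risk over all measurable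
classifiers disagrees with `sgn ∘ f_S` with `Q`-probability zero: the adversary exactly
extracts the server's model. -/
theorem minimizer_extracts_model {X : Type*} [MeasurableSpace X]
    (Q : Measure X) [IsProbabilityMeasure Q]
    (fS : X → ℝ) (hfS : Measurable fS)
    (c : X → ℝ) (hc : Measurable c) (hc01 : ∀ x, c x ∈ Set.Icc (0 : ℝ) 1)
    (cbar : ℝ) (hcbar : cbar < 1 / 2) (hcle : ∀ x, c x ≤ cbar)
    (h : X → ℝ) (hh : Measurable h) (hhpm : ∀ x, h x = 1 ∨ h x = -1)
    (hmin : ∀ g : X → ℝ, Measurable g → (∀ x, g x = 1 ∨ g x = -1) →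
      noisyRisk Q fS c h ≤ noisyRisk Q fS c g) :
    Q {x | h x ≠ sgn (fS x)} = 0 := by
  have hs : Measurable (fun x => sgn (fS x)) := by
    unfold sgn
    exact Measurable.ite (measurableSet_le measurable_const hfS) measurable_const measurable_const
  have hE : MeasurableSet {x | h x = sgn (fS x)} := measurableSet_eq_fun hh hs
  have hspm : ∀ x, sgn (fS x) = 1 ∨ sgn (fS x) = -1 := by
    intro x
    unfold sgn
    split_ifs <;> simp
  have h1 := hmin _ hs hspm
  have hcint : Integrable c Q := by
    refine Integrable.of_bound hc.aestronglyMeasurable 1 (Filter.Eventually.of_forall fun x => ?_)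
    rw [Real.norm_eq_abs, abs_le]
    constructor <;> linarith [(hc01 x).1, (hc01 x).2]
  set F : X → ℝ := fun x => (1 - c x) * (if h x ≠ sgn (fS x) then (1 : ℝ) else 0)
    + c x * (if h x = sgn (fS x) then (1 : ℝ) else 0) with hF
  have hFm : Measurable F := by
    refine Measurable.add (Measurable.mul (measurable_const.sub hc) ?_) (Measurable.mul hc ?_)
    · exact Measurable.ite hE.compl measurable_const measurable_const
    · exact Measurable.ite hE measurable_const measurable_const
  have hFint : Integrable F Q := by
    refine Integrable.of_bound hFm.aestronglyMeasurable 1 (Filter.Eventually.of_forall fun x => ?_)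
    have h0 := (hc01 x).1
    have h2 := (hc01 x).2
    rw [Real.norm_eq_abs, abs_le]
    by_cases hx : h x = sgn (fS x) <;> simp [hF, hx] <;> constructor <;> linarith
  have h3 : ∫ x, F x ∂Q ≤ ∫ x, c x ∂Q := by
    have h4 : noisyRisk Q fS c (fun x => sgn (fS x)) = ∫ x, c x ∂Q := by
      simp [noisyRisk]
    rw [h4] at h1
    exact h1
  have hnn : 0 ≤ fun x => F x - c x := by
    intro x
    have h2 := hcle x
    by_cases hx : h x = sgn (fS x)
    · simp [hF, hx]
    · simp [hF, hx]; linarith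
  have hz : ∫ x, (F x - c x) ∂Q = 0 := by
    apply le_antisymm
    · rw [integral_sub hFint hcint]; linarith
    · exact integral_nonneg hnn
  have hae := (integral_eq_zero_iff_of_nonneg hnn (hFint.sub hcint)).1 hz
  have hfin : ∀ᵐ x ∂Q, h x = sgn (fS x) := by
    filter_upwards [hae] with x hx
    by_contra hne
    have h2 := hcle x
    simp [hF, hne] at hx
    linarith
  exact ae_iff.1 hfin
end
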